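/- (Eulerian intercommunication) If (A,v,v) ∈ ℛ, then (A,v,v) ↔ (A,u,u) for every pair of vertices u, v ∈ V. -/

import Mathlib

attribute [local instance] Classical.propDecidable

namespace FPL

/-- Vertices of the brick-wall honeycomb lattice with periodic boundary conditions. -/
abbrev Vtx (m n : ℕ) := ZMod m × ZMod n

/-- Adjacency on the brick-wall honeycomb lattice: horizontal edges between `(i,j)` and
`(i+1,j)`, and vertical edges between `(i,j)` and `(i,j+1)` whenever `i+j` is even. -/
def HoneyAdj (m n : ℕ) (x y : Vtx m n) : Prop :=
  (x.2 = y.2 ∧ (y.1 = x.1 + 1 ∨ x.1 = y.1 + 1)) ∨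
  (x.1 = y.1 ∧ ((y.2 = x.2 + 1 ∧ Even (x.1.val + x.2.val)) ∨
                (x.2 = y.2 + 1 ∧ Even (y.1.val + y.2.val))))

variable (m n : ℕ) [NeZero m] [NeZero n]

/-- The edge set of the brick-wall honeycomb lattice. -/
noncomputable def honeyEdges : Finset (Sym2 (Vtx m n)) :=
  Finset.image (fun p : Vtx m n × Vtx m n => s(p.1, p.2))
    (Finset.univ.filter fun p => HoneyAdj m n p.1 p.2)

/-- `bdeg m n A x` is the degree of the vertex `x` in the spanning subgraph `(V, A)`. -/
noncomputable def bdeg (A : Finset (Sym2 (Vtx m n))) (x : Vtx m n) : ℕ :=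
  (A.filter fun e => x ∈ e).card

/-- `(A,u,v)` is a state of the worm chain: `A ⊆ E`, and the set of odd-degree vertices of
`(V,A)` is `{u,v}` if `u ≠ v`, and is empty if `u = v`. -/
def IsWormState (A : Finset (Sym2 (Vtx m n))) (u v : Vtx m n) : Prop :=
  A ⊆ honeyEdges m n ∧ ∀ x, (Odd (bdeg m n A x) ↔ ((x = u ∨ x = v) ∧ u ≠ v))

/-- The worm state space `𝒮`. -/
abbrev WormState := {p : Finset (Sym2 (Vtx m n)) × Vtx m n × Vtx m n //
  IsWormState m n p.1 p.2.1 p.2.2}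

/-- The set `ℛ` of states with no isolated vertices. -/
def FullSupport (st : WormState m n) : Prop := ∀ x : Vtx m n, bdeg m n st.1.1 x ≠ 0

/-- The fully-packed worm transition matrix `P'_∞`. -/
noncomputable def Pinf : Matrix (WormState m n) (WormState m n) ℝ := fun st tt =>
  if st.1.2.1 = st.1.2.2 then
    (if tt = st then (bdeg m n st.1.1 st.1.2.2 : ℝ) / 3 else 0) +
    (if ∃ v' : Vtx m n, HoneyAdj m n st.1.2.2 v' ∧ s(st.1.2.2, v') ∉ st.1.1 ∧
        tt.1.1 = insert s(st.1.2.2, v') st.1.1 ∧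
        ((tt.1.2.1 = v' ∧ tt.1.2.2 = st.1.2.2) ∨ (tt.1.2.1 = st.1.2.2 ∧ tt.1.2.2 = v'))
      then 1/6 else 0)
  else
    (if bdeg m n st.1.1 st.1.2.1 = 3 ∧ ∃ u' : Vtx m n, HoneyAdj m n st.1.2.1 u' ∧
        s(st.1.2.1, u') ∈ st.1.1 ∧ tt.1.1 = st.1.1.erase s(st.1.2.1, u') ∧
        tt.1.2.1 = u' ∧ tt.1.2.2 = st.1.2.2 then 1/6 else 0) +
    (if bdeg m n st.1.1 st.1.2.1 = 1 ∧ ∃ u' : Vtx m n, HoneyAdj m n st.1.2.1 u' ∧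
        s(st.1.2.1, u') ∉ st.1.1 ∧ tt.1.1 = insert s(st.1.2.1, u') st.1.1 ∧
        tt.1.2.1 = u' ∧ tt.1.2.2 = st.1.2.2 then 1/4 else 0) +
    (if bdeg m n st.1.1 st.1.2.2 = 3 ∧ ∃ v' : Vtx m n, HoneyAdj m n st.1.2.2 v' ∧
        s(st.1.2.2, v') ∈ st.1.1 ∧ tt.1.1 = st.1.1.erase s(st.1.2.2, v') ∧
        tt.1.2.1 = st.1.2.1 ∧ tt.1.2.2 = v' then 1/6 else 0) +
    (if bdeg m n st.1.1 st.1.2.2 = 1 ∧ ∃ v' : Vtx m n, HoneyAdj m n st.1.2.2 v' ∧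
        s(st.1.2.2, v') ∉ st.1.1 ∧ tt.1.1 = insert s(st.1.2.2, v') st.1.1 ∧
        tt.1.2.1 = st.1.2.1 ∧ tt.1.2.2 = v' then 1/4 else 0)

/-- `st → tt`: some power of `P'_∞` has positive `(st,tt)` entry. -/
def Reaches (st tt : WormState m n) : Prop := ∃ k : ℕ, 0 < (Pinf m n ^ k) st tt

/-- `st ↔ tt`: mutual reachability. -/
def Comm (st tt : WormState m n) : Prop := Reaches m n st tt ∧ Reaches m n tt st

/-- The fully-packed configuration consisting of all horizontal edges. -/
noncomputable def Hconfig : Finset (Sym2 (Vtx m n)) :=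
  Finset.image (fun p : Vtx m n => s(p, (p.1 + 1, p.2))) Finset.univ

/-!
Moving one defect of a worm state across an edge is a reversible move as long as the vertex it
arrives at had degree two. Since every vertex of the cubic lattice has even, nonzero degree in an
Eulerian state of `ℛ`, all degrees are two, and exactly one edge at each vertex is missing.

Let `v` and `u` be adjacent. If `vu ∉ A`, then `(A, v, v)` and `(A, u, u)` both reach
`(A ∪ {vu}, u, v)` by one reversible move. If `vu ∈ A`, let `vv'` and `uu'` be the missing edges at
`v` and `u`. Adding `vv'`, deleting `vu` and adding `uu'` leads reversibly from `(A, v, v)` to a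
state with edges `A ∪ {vv', uu'} ∖ {vu}` and defects `u'`, `v'`; this state is unchanged when `u`
and `v` trade places, so it also intercommunicates with `(A, u, u)`. The lattice is connected, so
any two vertices are joined by a chain of such steps.
-/

open Relation

section Worm

variable {V : Type*} [DecidableEq V] {G : SimpleGraph V} {A B : Finset (Sym2 V)}
  {e : Sym2 V} {u u' v v' x : V}

/-- The degree `d_x(A)` of `x` in `(V, A)`: the notion `bdeg`, on an arbitrary vertex set `V`. -/
def edgeDegree (A : Finset (Sym2 V)) (x : V) : ℕ :=
  (A.filter fun e => x ∈ e).card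

theorem edgeDegree_insert (he : e ∉ A) (x : V) :
    edgeDegree (insert e A) x = edgeDegree A x + if x ∈ e then 1 else 0 := by
  by_cases hx : x ∈ e <;> simp [edgeDegree, Finset.filter_insert, hx, he]

theorem edgeDegree_erase_add (he : e ∈ A) (x : V) :
    (edgeDegree (A.erase e) x + if x ∈ e then 1 else 0) = edgeDegree A x := by
  rw [← edgeDegree_insert (Finset.notMem_erase e A), Finset.insert_erase he]

theorem filter_mem_subset_incidenceFinset [Fintype (G.neighborSet x)]
    (hA : (A : Set (Sym2 V)) ⊆ G.edgeSet) : A.filter (x ∈ ·) ⊆ G.incidenceFinset x := by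
  intro e he
  obtain ⟨heA, hxe⟩ := Finset.mem_filter.1 he
  exact (G.mem_incidenceFinset x e).2 ⟨hA heA, hxe⟩

theorem edgeDegree_le_degree [Fintype (G.neighborSet x)] (hA : (A : Set (Sym2 V)) ⊆ G.edgeSet) :
    edgeDegree A x ≤ G.degree x :=
  (Finset.card_le_card (filter_mem_subset_incidenceFinset hA)).trans_eq
    (G.card_incidenceFinset_eq_degree x)

theorem existsUnique_adj_notMem_of_degree_eq [Fintype (G.neighborSet x)]
    (hA : (A : Set (Sym2 V)) ⊆ G.edgeSet) (hdeg : G.degree x = edgeDegree A x + 1) :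
    ∃! y, G.Adj x y ∧ s(x, y) ∉ A := by
  have hcard : (G.incidenceFinset x \ A.filter (x ∈ ·)).card = 1 := by
    rw [Finset.card_sdiff_of_subset (filter_mem_subset_incidenceFinset hA),
      G.card_incidenceFinset_eq_degree, hdeg, edgeDegree, Nat.add_sub_cancel_left]
  obtain ⟨e, he⟩ := Finset.card_eq_one.1 hcard
  have hmissing (y : V) : G.Adj x y ∧ s(x, y) ∉ A ↔ s(x, y) = e := by
    rw [← Finset.mem_singleton, ← he]
    simp
  obtain ⟨y, rfl⟩ : x ∈ e :=
    ((G.mem_incidenceFinset x e).1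
      (Finset.mem_sdiff.1 (he ▸ Finset.mem_singleton_self e)).1).2
  exact ⟨y, (hmissing y).2 rfl, fun z hz => Sym2.congr_right.1 ((hmissing z).1 hz)⟩

/-- The nonidentity transitions of the fully-packed worm chain on a graph `G`, as a relation on
triples `(A, u, v)`. The first three constructors move the left defect; those of the right defect
come from `swap`. -/
inductive WormMove (G : SimpleGraph V) :
    Finset (Sym2 V) × V × V → Finset (Sym2 V) × V × V → Prop
  | start {A : Finset (Sym2 V)} {v v' : V} (hadj : G.Adj v v') (hA : s(v, v') ∉ A) :
      WormMove G (A, v, v) (insert s(v, v') A, v', v)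
  | eraseEdge {A : Finset (Sym2 V)} {u u' v : V} (huv : u ≠ v) (hd : edgeDegree A u = 3)
      (hadj : G.Adj u u') (hA : s(u, u') ∈ A) :
      WormMove G (A, u, v) (A.erase s(u, u'), u', v)
  | addEdge {A : Finset (Sym2 V)} {u u' v : V} (huv : u ≠ v) (hd : edgeDegree A u = 1)
      (hadj : G.Adj u u') (hA : s(u, u') ∉ A) :
      WormMove G (A, u, v) (insert s(u, u') A, u', v)
  | swap {A B : Finset (Sym2 V)} {u v u' v' : V} (h : WormMove G (A, u, v) (B, u', v')) :
      WormMove G (A, v, u) (B, v', u')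

/-- The intercommunication relation `↔` of the worm chain on `G`, in terms of `WormMove`. -/
abbrev WormIntercomm (G : SimpleGraph V) :
    Finset (Sym2 V) × V × V → Finset (Sym2 V) × V × V → Prop :=
  AntisymmRel (ReflTransGen (WormMove G))

namespace WormIntercomm

theorem swap (h : WormIntercomm G (A, u, v) (B, u', v')) :
    WormIntercomm G (A, v, u) (B, v', u') :=
  ⟨h.1.lift (fun p => (p.1, p.2.swap)) fun _ _ => WormMove.swap,
    h.2.lift (fun p => (p.1, p.2.swap)) fun _ _ => WormMove.swap⟩

theorem start (hadj : G.Adj v v') (hA : s(v, v') ∉ A) (hd : edgeDegree A v' = 2) :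
    WormIntercomm G (A, v, v) (insert s(v, v') A, v', v) := by
  have hback : WormMove G (insert s(v, v') A, v', v) ((insert s(v, v') A).erase s(v', v), v, v) :=
    .eraseEdge hadj.ne' (by simp [edgeDegree_insert hA, hd]) hadj.symm (by simp [Sym2.eq_swap])
  rw [Sym2.eq_swap (a := v'), Finset.erase_insert hA] at hback
  exact ⟨.single (.start hadj hA), .single hback⟩

theorem addEdge (huv : u ≠ v) (hu'v : u' ≠ v) (hadj : G.Adj u u') (hA : s(u, u') ∉ A)
    (hd : edgeDegree A u = 1) (hd' : edgeDegree A u' = 2) :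
    WormIntercomm G (A, u, v) (insert s(u, u') A, u', v) := by
  have hback : WormMove G (insert s(u, u') A, u', v) ((insert s(u, u') A).erase s(u', u), u, v) :=
    .eraseEdge hu'v (by simp [edgeDegree_insert hA, hd']) hadj.symm (by simp [Sym2.eq_swap])
  rw [Sym2.eq_swap (a := u'), Finset.erase_insert hA] at hback
  exact ⟨.single (.addEdge huv hd hadj hA), .single hback⟩

theorem eraseEdge (huv : u ≠ v) (hu'v : u' ≠ v) (hadj : G.Adj u u') (hA : s(u, u') ∈ A)
    (hd : edgeDegree A u = 3) (hd' : edgeDegree A u' = 2) :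
    WormIntercomm G (A, u, v) (A.erase s(u, u'), u', v) := by
  have hu := edgeDegree_erase_add hA u
  have hu' := edgeDegree_erase_add hA u'
  simp only [Sym2.mem_iff, true_or, or_true, if_true] at hu hu'
  rw [Sym2.eq_swap] at hA hu hu' ⊢
  simpa only [Finset.insert_erase hA] using
    (addEdge hu'v huv hadj.symm (Finset.notMem_erase _ A) (by omega) (by omega)).symm

theorem rotate (hdeg : ∀ x, edgeDegree A x = 2) (hadj : G.Adj v u) (hvu : s(v, u) ∈ A)
    (hv : G.Adj v v') (hvv' : s(v, v') ∉ A) (hu : G.Adj u u') (huu' : s(u, u') ∉ A)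
    (hne : u' ≠ v') :
    WormIntercomm G (A, v, v)
      (insert s(u, u') (insert s(v, v') (A.erase s(v, u))), u', v') := by
  have huv' : u ≠ v' := by rintro rfl; exact hvv' hvu
  have hu'v : u' ≠ v := by rintro rfl; exact huu' (Sym2.eq_swap ▸ hvu)
  have hdeg_erase (x : V) := edgeDegree_erase_add hvu x
  simp only [hdeg, Sym2.mem_iff] at hdeg_erase
  have hvv'_erase : s(v, v') ∉ A.erase s(v, u) := mt Finset.mem_of_mem_erase hvv'
  have hdeg_mid (x : V) := edgeDegree_insert hvv'_erase x
  simp only [Sym2.mem_iff] at hdeg_mid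
  have hopen : WormIntercomm G (A, v, v) (insert s(v, v') A, v, v') :=
    (start hv hvv' (hdeg v')).swap
  have hslide : WormIntercomm G (insert s(v, v') A, v, v')
      (insert s(v, v') (A.erase s(v, u)), u, v') := by
    rw [← Finset.erase_insert_of_ne (by simp [huv'.symm, hadj.ne])]
    exact eraseEdge hv.ne huv' hadj (Finset.mem_insert_of_mem hvu)
      (by simp [edgeDegree_insert hvv', hdeg])
      (by simp [edgeDegree_insert hvv', hdeg, hadj.ne', huv'])
  refine (hopen.trans hslide).trans (addEdge huv' hne hu ?_ ?_ ?_)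
  · simp [huu', hadj.ne', hu'v]
  · have := hdeg_erase u
    simpa [hdeg_mid, hadj.ne', huv'] using this
  · have := hdeg_erase u'
    simpa [hdeg_mid, hu.ne', hu'v, hne] using this

theorem of_adj (hdeg : ∀ x, edgeDegree A x = 2)
    (hmissing : ∀ x, ∃! y, G.Adj x y ∧ s(x, y) ∉ A) (hadj : G.Adj v u) :
    WormIntercomm G (A, v, v) (A, u, u) := by
  by_cases hvu : s(v, u) ∈ A
  · obtain ⟨v', ⟨hv, hvv'⟩, -⟩ := hmissing v
    obtain ⟨u', ⟨hu, huu'⟩, -⟩ := hmissing u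
    have hne : u' ≠ v' := by
      rintro rfl
      exact hadj.ne ((hmissing u').unique ⟨hv.symm, Sym2.eq_swap ▸ hvv'⟩
        ⟨hu.symm, Sym2.eq_swap ▸ huu'⟩)
    have hfrom_v := rotate hdeg hadj hvu hv hvv' hu huu' hne
    have hfrom_u := rotate hdeg hadj.symm (Sym2.eq_swap ▸ hvu) hu huu' hv hvv' hne.symm
    rw [Finset.insert_comm, Sym2.eq_swap (a := u) (b := v)] at hfrom_u
    exact hfrom_v.trans hfrom_u.swap.symm
  · have hfrom_v := start hadj hvu (hdeg u)
    have hfrom_u := start hadj.symm (Sym2.eq_swap ▸ hvu) (hdeg v)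
    rw [Sym2.eq_swap] at hfrom_u
    exact hfrom_v.trans hfrom_u.swap.symm

theorem of_preconnected (hG : G.Preconnected) (hdeg : ∀ x, edgeDegree A x = 2)
    (hmissing : ∀ x, ∃! y, G.Adj x y ∧ s(x, y) ∉ A) (v u : V) :
    WormIntercomm G (A, v, v) (A, u, u) := by
  obtain ⟨p⟩ := hG v u
  induction p with
  | nil => exact .rfl
  | cons hadj _ ih => exact (of_adj hdeg hmissing hadj).trans ih

end WormIntercomm

end Worm

section Honeycomb

theorem even_val_add_one {k : ℕ} [NeZero k] (hk : Even k) (a : ZMod k) :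
    Even (a + 1).val ↔ ¬Even a.val := by
  rw [← Nat.even_add_one, ← ZMod.natCast_eq_zero_iff_even, ← ZMod.natCast_eq_zero_iff_even,
    Nat.cast_add, ZMod.natCast_val, ZMod.natCast_val, ZMod.cast_add hk.two_dvd,
    ZMod.cast_one hk.two_dvd, Nat.cast_one]

theorem exists_even_val_add {k : ℕ} [Nontrivial (ZMod k)] (b : ℕ) :
    ∃ a : ZMod k, Even (a.val + b) := by
  rcases Nat.even_or_odd b with hb | hb
  · exact ⟨0, by simpa using hb⟩
  · have hk : k ≠ 1 := ZMod.nontrivial_iff.1 inferInstance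
    exact ⟨1, by rw [ZMod.val_one'' hk]; exact odd_one.add_odd hb⟩

theorem reflTransGen_add_one {k : ℕ} [NeZero k] (a b : ZMod k) :
    ReflTransGen (fun x y => y = x + 1) a b := by
  have hstep (t : ℕ) : ReflTransGen (fun x y => y = x + 1) a (a + t) := by
    induction t with
    | zero => simpa using ReflTransGen.refl
    | succ t ih => exact ih.tail (by push_cast; ring)
  simpa using hstep (b - a).val

theorem HoneyAdj.symm {m n : ℕ} {x y : Vtx m n} (h : HoneyAdj m n x y) : HoneyAdj m n y x := by
  unfold HoneyAdj at *
  tauto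

theorem HoneyAdj.ne {m n : ℕ} [Nontrivial (ZMod m)] [Nontrivial (ZMod n)] {x y : Vtx m n}
    (h : HoneyAdj m n x y) : x ≠ y := by
  rintro rfl
  simp [HoneyAdj] at h

theorem honeyAdj_iff {m n : ℕ} [NeZero n] (hn : Even n) {i : ZMod m} {j : ZMod n} {y : Vtx m n} :
    HoneyAdj m n (i, j) y ↔
      y = (i + 1, j) ∨ y = (i - 1, j) ∨ y = (i, if Even (i.val + j.val) then j + 1 else j - 1) := by
  obtain ⟨k, l⟩ := y
  have hl : j = l + 1 → (Even (k.val + l.val) ↔ ¬Even (k.val + j.val)) := by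
    rintro rfl
    simp only [Nat.even_add, even_val_add_one hn]
    tauto
  simp only [HoneyAdj, Prod.mk.injEq]
  split_ifs with he <;> grind

/-- The lattice `𝐇` as a `SimpleGraph`. `fromEdgeSet` discards the loops that `HoneyAdj` has
when `m = 1` or `n = 1`. -/
def honeycomb : SimpleGraph (Vtx m n) :=
  .fromEdgeSet (honeyEdges m n)

variable {m n}

theorem mem_honeyEdges {x y : Vtx m n} : s(x, y) ∈ honeyEdges m n ↔ HoneyAdj m n x y := by
  simp only [honeyEdges, Finset.mem_image, Finset.mem_filter, Finset.mem_univ, true_and]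
  refine ⟨?_, fun h => ⟨(x, y), h, rfl⟩⟩
  rintro ⟨⟨a, b⟩, h, he⟩
  rcases Sym2.eq_iff.1 he with ⟨rfl, rfl⟩ | ⟨rfl, rfl⟩
  exacts [h, h.symm]

theorem honeycomb_adj_iff {x y : Vtx m n} :
    (honeycomb m n).Adj x y ↔ HoneyAdj m n x y ∧ x ≠ y := by
  simp [honeycomb, mem_honeyEdges]

theorem coe_honeyEdges [Nontrivial (ZMod m)] [Nontrivial (ZMod n)] :
    (honeyEdges m n : Set (Sym2 (Vtx m n))) = (honeycomb m n).edgeSet := by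
  ext ⟨x, y⟩
  simpa [honeycomb_adj_iff, mem_honeyEdges] using HoneyAdj.ne

theorem degree_honeycomb (hm : 3 ≤ m) (hn : Even n) (x : Vtx m n)
    [Fintype ((honeycomb m n).neighborSet x)] : (honeycomb m n).degree x = 3 := by
  obtain ⟨i, j⟩ := x
  have : Nontrivial (ZMod m) := ZMod.nontrivial_iff.2 (by omega)
  have : Nontrivial (ZMod n) := ZMod.nontrivial_iff.2 (by rintro rfl; simp at hn)
  have htwo : (2 : ZMod m) ≠ 0 := by
    rw [← Nat.cast_two, Ne, ZMod.natCast_eq_zero_iff]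
    exact Nat.not_dvd_of_pos_of_lt two_pos hm
  have hhor : i + 1 ≠ i - 1 := fun h => htwo (by linear_combination h)
  have hnbr : (honeycomb m n).neighborFinset (i, j) =
      {(i + 1, j), (i - 1, j), (i, if Even (i.val + j.val) then j + 1 else j - 1)} := by
    ext y
    rw [SimpleGraph.mem_neighborFinset, honeycomb_adj_iff, and_iff_left_of_imp HoneyAdj.ne,
      honeyAdj_iff hn]
    simp
  rw [← SimpleGraph.card_neighborFinset_eq_degree, hnbr]
  exact Finset.card_eq_three.2 ⟨_, _, _, by simp [hhor], by simp, by simp, rfl⟩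

theorem HoneyAdj.reachable {x y : Vtx m n} (h : HoneyAdj m n x y) :
    (honeycomb m n).Reachable x y := by
  by_cases hxy : x = y
  · exact hxy ▸ .rfl
  · exact (honeycomb_adj_iff.2 ⟨h, hxy⟩).reachable

theorem honeycomb_reachable_row (i i' : ZMod m) (j : ZMod n) :
    (honeycomb m n).Reachable (i, j) (i', j) := by
  induction reflTransGen_add_one i i' with
  | refl => exact .rfl
  | @tail k _ _ hk ih =>
    have hhor : HoneyAdj m n (k, j) (k + 1, j) := .inl ⟨rfl, .inl rfl⟩
    exact ih.trans (hk ▸ hhor.reachable)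

theorem honeycomb_reachable_add_one [Nontrivial (ZMod m)] (i : ZMod m) (j : ZMod n) :
    (honeycomb m n).Reachable (i, j) (i, j + 1) := by
  obtain ⟨k, hk⟩ : ∃ k : ZMod m, Even (k.val + j.val) := exists_even_val_add j.val
  have hvert : HoneyAdj m n (k, j) (k, j + 1) := .inr ⟨rfl, .inl ⟨rfl, hk⟩⟩
  exact (honeycomb_reachable_row i k j).trans
    (hvert.reachable.trans (honeycomb_reachable_row k i (j + 1)))

theorem honeycomb_preconnected [Nontrivial (ZMod m)] : (honeycomb m n).Preconnected := by
  rintro ⟨i, j⟩ ⟨i', j'⟩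
  refine (honeycomb_reachable_row i i' j).trans ?_
  induction reflTransGen_add_one j j' with
  | refl => exact .rfl
  | tail _ hl ih => exact ih.trans (hl ▸ honeycomb_reachable_add_one i' _)

end Honeycomb

section Chain

theorem exists_pow_apply_pos_of_reflTransGen {ι R : Type*} [Fintype ι] [DecidableEq ι] [Ring R]
    [LinearOrder R] [IsOrderedRing R] [PosMulStrictMono R] [Nontrivial R] {M : Matrix ι ι R}
    (hM : ∀ i j, 0 ≤ M i j) {i j : ι} (h : ReflTransGen (fun a b => 0 < M a b) i j) :
    ∃ k, 0 < (M ^ k) i j := by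
  let := M.toQuiver
  obtain ⟨p⟩ : Nonempty (Quiver.Path i j) := by
    induction h with
    | refl => exact ⟨.nil⟩
    | tail _ hpos ih => exact ih.map fun p => p.cons ⟨hpos⟩
  exact ⟨p.length, (Matrix.pow_apply_pos_iff_nonempty_path hM _ i j).2 ⟨p, rfl⟩⟩

variable {m n} {A B : Finset (Sym2 (Vtx m n))} {u u' v v' x : Vtx m n}
  {p q : Finset (Sym2 (Vtx m n)) × Vtx m n × Vtx m n}

theorem Pinf_nonneg (s t : WormState m n) : 0 ≤ Pinf m n s t := by
  unfold Pinf
  split_ifs <;> positivity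

theorem IsWormState.swap (h : IsWormState m n A u v) : IsWormState m n A v u :=
  ⟨h.1, fun x => by rw [h.2 x, or_comm, ne_comm]⟩

theorem Pinf_swap (hs : IsWormState m n A u v) (ht : IsWormState m n B u' v') :
    Pinf m n ⟨(A, v, u), hs.swap⟩ ⟨(B, v', u'), ht.swap⟩ =
      Pinf m n ⟨(A, u, v), hs⟩ ⟨(B, u', v'), ht⟩ := by
  unfold Pinf
  rcases eq_or_ne u v with rfl | huv
  · simp only [if_true, Subtype.mk.injEq, Prod.mk.injEq, and_comm, or_comm]
  · simp only [huv, huv.symm, if_false, and_comm]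
    ring

theorem IsWormState.addEdge (h : IsWormState m n A u v) (hadj : (honeycomb m n).Adj u u')
    (hA : s(u, u') ∉ A) : IsWormState m n (insert s(u, u') A) u' v := by
  obtain ⟨hadj, hne⟩ := honeycomb_adj_iff.1 hadj
  refine ⟨Finset.insert_subset (mem_honeyEdges.2 hadj) h.1, fun x => ?_⟩
  have hx := h.2 x
  have hdeg : bdeg m n (insert s(u, u') A) x = _ := edgeDegree_insert hA x
  change _ = bdeg m n A x + _ at hdeg
  grind

theorem IsWormState.eraseEdge (h : IsWormState m n A u v) (hne : u ≠ u') (hA : s(u, u') ∈ A) :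
    IsWormState m n (A.erase s(u, u')) u' v := by
  refine ⟨(Finset.erase_subset _ A).trans h.1, fun x => ?_⟩
  have hx := h.2 x
  have hdeg : _ = bdeg m n A x := edgeDegree_erase_add hA x
  change bdeg m n (A.erase s(u, u')) x + _ = _ at hdeg
  grind

theorem exists_Pinf_pos_of_wormMove (h : WormMove (honeycomb m n) p q)
    (hp : IsWormState m n p.1 p.2.1 p.2.2) :
    ∃ hq : IsWormState m n q.1 q.2.1 q.2.2, 0 < Pinf m n ⟨p, hp⟩ ⟨q, hq⟩ := by
  induction h with
  | start hadj hA =>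
    refine ⟨hp.addEdge hadj hA, ?_⟩
    have hadj := (honeycomb_adj_iff.1 hadj).1
    rw [Pinf, if_pos rfl, if_pos (c := ∃ _, _) ⟨_, hadj, hA, rfl, .inl ⟨rfl, rfl⟩⟩]
    refine add_pos_of_nonneg_of_pos ?_ (by norm_num)
    split_ifs <;> positivity
  | eraseEdge huv hd hadj hA =>
    refine ⟨hp.eraseEdge hadj.ne hA, ?_⟩
    have hadj := (honeycomb_adj_iff.1 hadj).1
    rw [Pinf, if_neg huv, if_pos ⟨hd, _, hadj, hA, rfl, rfl, rfl⟩]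
    split_ifs <;> positivity
  | @addEdge A u u' v huv hd hadj hA =>
    refine ⟨hp.addEdge hadj hA, ?_⟩
    have hadj := (honeycomb_adj_iff.1 hadj).1
    rw [Pinf, if_neg huv, if_pos (c := bdeg m n A u = 1 ∧ _) ⟨hd, _, hadj, hA, rfl, rfl, rfl⟩]
    split_ifs <;> positivity
  | swap _ ih =>
    obtain ⟨hq, hpos⟩ := ih hp.swap
    exact ⟨hq.swap, by rwa [Pinf_swap hp.swap hq]⟩

theorem exists_reaches_of_reflTransGen_wormMove
    (h : ReflTransGen (WormMove (honeycomb m n)) p q) (hp : IsWormState m n p.1 p.2.1 p.2.2) :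
    ∃ hq : IsWormState m n q.1 q.2.1 q.2.2, Reaches m n ⟨p, hp⟩ ⟨q, hq⟩ := by
  suffices ∃ hq, ReflTransGen (fun s t => 0 < Pinf m n s t) ⟨p, hp⟩ ⟨q, hq⟩ from
    this.imp fun _ => exists_pow_apply_pos_of_reflTransGen Pinf_nonneg
  induction h with
  | refl => exact ⟨hp, .refl⟩
  | tail _ hmove ih =>
    obtain ⟨hr, hreach⟩ := ih
    obtain ⟨hq, hpos⟩ := exists_Pinf_pos_of_wormMove hmove hr
    exact ⟨hq, hreach.tail hpos⟩

theorem WormIntercomm.exists_comm (h : WormIntercomm (honeycomb m n) p q)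
    (hp : IsWormState m n p.1 p.2.1 p.2.2) :
    ∃ hq : IsWormState m n q.1 q.2.1 q.2.2, Comm m n ⟨p, hp⟩ ⟨q, hq⟩ := by
  obtain ⟨hq, hpq⟩ := exists_reaches_of_reflTransGen_wormMove h.1 hp
  obtain ⟨_, hqp⟩ := exists_reaches_of_reflTransGen_wormMove h.2 hq
  exact ⟨hq, hpq, hqp⟩

theorem bdeg_eq_two (hm : 3 ≤ m) (hn : Even n)
    (hA : (A : Set (Sym2 (Vtx m n))) ⊆ (honeycomb m n).edgeSet) (heven : Even (bdeg m n A x))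
    (hx : bdeg m n A x ≠ 0) : bdeg m n A x = 2 := by
  have hle : bdeg m n A x ≤ (honeycomb m n).degree x := edgeDegree_le_degree hA
  rw [degree_honeycomb hm hn] at hle
  grind

end Chain

theorem eulerian_intercomm_general (m n : ℕ) [NeZero m] [NeZero n] (hm : 3 ≤ m) (hn : Even n)
    (st : WormState m n) (v : Vtx m n) (hst : st.1.2 = (v, v))
    (hR : FullSupport m n st) (u : Vtx m n) :
    ∃ t1 : WormState m n, t1.1 = (st.1.1, u, u) ∧ Comm m n st t1 := by
  obtain ⟨⟨A, p⟩, hA⟩ := st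
  obtain rfl : p = (v, v) := hst
  have : Nontrivial (ZMod m) := ZMod.nontrivial_iff.2 (by omega)
  have : Nontrivial (ZMod n) := ZMod.nontrivial_iff.2 (by rintro rfl; simp at hn)
  have hsub : (A : Set (Sym2 (Vtx m n))) ⊆ (honeycomb m n).edgeSet :=
    (Finset.coe_subset.2 hA.1).trans_eq coe_honeyEdges
  have heven (x : Vtx m n) : Even (bdeg m n A x) := by simp [← Nat.not_odd_iff_even, hA.2 x]
  have htwo (x : Vtx m n) : edgeDegree A x = 2 := bdeg_eq_two hm hn hsub (heven x) (hR x)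
  have hmissing (x : Vtx m n) : ∃! y, (honeycomb m n).Adj x y ∧ s(x, y) ∉ A :=
    existsUnique_adj_notMem_of_degree_eq hsub (by rw [degree_honeycomb hm hn, htwo])
  obtain ⟨hu, hcomm⟩ :=
    (WormIntercomm.of_preconnected honeycomb_preconnected htwo hmissing v u).exists_comm hA
  exact ⟨⟨(A, u, u), hu⟩, rfl, hcomm⟩

theorem eulerian_intercomm (m n : ℕ) [NeZero m] [NeZero n]
    (hm : Even m) (hn : Even n) (hm4 : 4 ≤ m) (hn4 : 4 ≤ n)
    (st : WormState m n) (v : Vtx m n) (hst : st.1.2 = (v, v))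
    (hR : FullSupport m n st) (u : Vtx m n) :
    ∃ t1 : WormState m n, t1.1 = (st.1.1, u, u) ∧ Comm m n st t1 :=
  eulerian_intercomm_general m n (by omega) hn st v hst hR u

end FPL
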